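/- Let d_1,…,d_q be positive integers with ∑_j d_j = p, and for φ ∈ ℝ^q let θ(φ,d) ∈ ℝ^p be the vector in which φ_j appears d_j times, for j = 1,…,q. Define D(φ) = C(θ(φ,d)) and G_j(φ) = ∂D/∂φ_j. Then on the set {φ ∈ ℝ^q : φ_i ≠ φ_j for all i ≠ j}, the following Pfaffian system holds: for i ≠ j, ∂G_j/∂φ_i = (d_j G_i − d_i G_j)/(2(φ_i − φ_j)), and for each i, ∂G_i/∂φ_i = G_i − ∑_{k ≠ i} (d_k G_i − d_i G_k)/(2(φ_i − φ_k)). -/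

import Mathlib

open MeasureTheory

/-- The normalising constant of the Bingham distribution. -/
noncomputable def binghamC (p : ℕ) (θ : Fin p → ℝ) : ℝ :=
  ∫ x in {x : EuclideanSpace ℝ (Fin p) | ‖x‖ = 1},
    Real.exp (∑ i, θ i * x i ^ 2) ∂ μH[(p : ℝ) - 1]

/-!
Let `T_j` be the sum of the squared coordinates in the `j`-th block. Differentiating under the
integral, `G_j` and `∂G_j/∂φ_i` are the integrals of `T_j` and `T_j T_i` against the Bingham
density `w(x) = exp (∑ θ_c x_c²)`. Since the base measure is invariant under the rotations
`exp (t J)` in the plane of the coordinates `a` and `b`, the integral of the derivative of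
`x_a x_b w` along `J` vanishes, which reads `∫ (x_a² - x_b²) w = 2 (θ_a - θ_b) ∫ x_a² x_b² w`.
Summing over `a` in block `i` and `b` in block `j` gives the mixed derivatives, and `∑_j T_j = 1`
on the sphere gives the diagonal ones.
-/

open Topology Metric Module NormedSpace Finset

section HausdorffMeasure

theorem hausdorffMeasure_image_lt_top {F Y : Type*} [NormedAddCommGroup F] [NormedSpace ℝ F]
    [FiniteDimensional ℝ F] [MetricSpace Y] [MeasurableSpace Y] [BorelSpace Y] {f : F → Y}
    {K : Set F} (hf : LocallyLipschitz f) (hK : IsCompact K) :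
    μH[finrank ℝ F] (f '' K) < ⊤ := by
  borelize F
  obtain ⟨C, hC⟩ := hf.locallyLipschitzOn.exists_lipschitzOnWith_of_compact hK
  exact (hC.hausdorffMeasure_image_le (Nat.cast_nonneg _)).trans_lt
    (ENNReal.mul_lt_top (by simp) hK.measure_lt_top)

variable {E : Type*} [NormedAddCommGroup E] [InnerProductSpace ℝ E]

theorem norm_stereoToFun_le {v x : E} (hx : ‖x‖ = 1) (hvx : inner ℝ v x ≤ 0) :
    ‖stereoToFun v x‖ ≤ 2 := by
  have hproj : ‖(ℝ ∙ v)ᗮ.orthogonalProjectionOnto x‖ ≤ 1 :=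
    hx ▸ (ℝ ∙ v)ᗮ.norm_orthogonalProjectionOnto_apply_le x
  have hcoeff : ‖2 / (1 - inner ℝ v x)‖ ≤ 2 := by
    rw [Real.norm_of_nonneg (div_nonneg zero_le_two (by linarith)), div_le_iff₀ (by linarith)]
    linarith
  rw [stereoToFun_apply, norm_smul]
  simpa using mul_le_mul hcoeff hproj (norm_nonneg _) zero_le_two

theorem hemisphere_subset_image_stereoInvFunAux {v : E} (hv : ‖v‖ = 1) :
    {x | ‖x‖ = 1 ∧ inner ℝ v x ≤ 0} ⊆
      (fun w : (ℝ ∙ v)ᗮ => stereoInvFunAux v w) '' closedBall 0 2 := by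
  rintro x ⟨hx, hvx⟩
  have hne : x ≠ v := by
    rintro rfl
    norm_num [real_inner_self_eq_norm_sq, hx] at hvx
  exact ⟨stereoToFun v x, by simpa using norm_stereoToFun_le hx hvx,
    congrArg Subtype.val (stereo_left_inv hv (x := ⟨x, by simpa using hx⟩) hne)⟩

variable [MeasurableSpace E] [BorelSpace E]

theorem hausdorffMeasure_hemisphere_lt_top [FiniteDimensional ℝ E] {v : E} (hv : ‖v‖ = 1) :
    μH[(finrank ℝ E : ℝ) - 1] {x | ‖x‖ = 1 ∧ inner ℝ v x ≤ 0} < ⊤ := by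
  have hdim : (finrank ℝ E : ℝ) - 1 = finrank ℝ (ℝ ∙ v)ᗮ := by
    rw [← (ℝ ∙ v).finrank_add_finrank_orthogonal,
      finrank_span_singleton (norm_ne_zero_iff.1 (by simp [hv]))]
    simp
  rw [hdim]
  refine (measure_mono (hemisphere_subset_image_stereoInvFunAux hv)).trans_lt
    (hausdorffMeasure_image_lt_top ?_ (isCompact_closedBall _ _))
  exact (contDiff_stereoInvFunAux.comp (ℝ ∙ v)ᗮ.subtypeL.contDiff).locallyLipschitz

theorem hausdorffMeasure_unitSphere_lt_top [FiniteDimensional ℝ E] :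
    μH[(finrank ℝ E : ℝ) - 1] {x : E | ‖x‖ = 1} < ⊤ := by
  obtain hempty | ⟨v, hv⟩ := {x : E | ‖x‖ = 1}.eq_empty_or_nonempty
  · simp [hempty]
  refine (measure_mono fun x (hx : ‖x‖ = 1) => ?_).trans_lt
    (measure_union_lt_top (hausdorffMeasure_hemisphere_lt_top hv)
      (hausdorffMeasure_hemisphere_lt_top (v := -v) (by simpa using hv)))
  simpa [hx] using le_total (inner ℝ v x) 0

theorem measurePreserving_hausdorffMeasure_restrict_unitSphere (s : ℝ) (R : E ≃ₗᵢ[ℝ] E) :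
    MeasurePreserving R (μH[s].restrict {x : E | ‖x‖ = 1}) (μH[s].restrict {x : E | ‖x‖ = 1}) := by
  have h := (R.toIsometryEquiv.measurePreserving_hausdorffMeasure s).restrict_preimage
    (s := {x : E | ‖x‖ = 1}) (measurableSet_eq_fun measurable_norm measurable_const)
  simpa using h

end HausdorffMeasure

section CompactlyCarriedMeasure

variable {X : Type*} [TopologicalSpace X] [SecondCountableTopology X] [MeasurableSpace X]
  [OpensMeasurableSpace X] {μ : Measure X} [IsFiniteMeasure μ] {K : Set X}

theorem integrable_of_continuous_of_ae_mem_compact {V : Type*} [NormedAddCommGroup V]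
    (hK : IsCompact K) (hμK : ∀ᵐ x ∂μ, x ∈ K) {f : X → V} (hf : Continuous f) :
    Integrable f μ := by
  obtain ⟨C, hC⟩ := hK.exists_bound_of_continuousOn hf.continuousOn
  exact .of_bound hf.aestronglyMeasurable C (hμK.mono hC)

variable {H V : Type*} [NormedAddCommGroup H] [NormedSpace ℝ H]
  [NormedAddCommGroup V] [NormedSpace ℝ V]

theorem hasFDerivAt_integral_of_ae_mem_compact (hK : IsCompact K) (hμK : ∀ᵐ x ∂μ, x ∈ K)
    {F : H → X → V} {F' : H → X → H →L[ℝ] V} (hF : ∀ h, Continuous (F h))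
    (hF' : Continuous fun z : H × X => F' z.1 z.2)
    (hderiv : ∀ h x, HasFDerivAt (F · x) (F' h x) h) (h₀ : H) :
    HasFDerivAt (fun h => ∫ x, F h x ∂μ) (∫ x, F' h₀ x ∂μ) h₀ := by
  have hF'₀ : Continuous (F' h₀) := hF'.comp (Continuous.prodMk_right h₀)
  obtain ⟨C, hC⟩ := hK.exists_bound_of_continuousOn hF'₀.continuousOn
  have hbound : ∀ᶠ h in 𝓝 h₀, ∀ x ∈ K, ‖F' h x‖ < C + 1 :=
    hK.eventually_forall_of_forall_eventually fun x hx =>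
      hF'.norm.continuousAt.eventually_lt_const ((hC x hx).trans_lt (lt_add_one C))
  exact hasFDerivAt_integral_of_dominated_of_fderiv_le hbound
    (.of_forall fun h => (hF h).aestronglyMeasurable)
    (integrable_of_continuous_of_ae_mem_compact hK hμK (hF h₀))
    hF'₀.aestronglyMeasurable (hμK.mono fun x hx h hh => (hh x hx).le)
    (integrable_const (C + 1)) (.of_forall fun x h _ => hderiv h x)

theorem hasDerivAt_integral_of_ae_mem_compact [CompleteSpace V] (hK : IsCompact K)
    (hμK : ∀ᵐ x ∂μ, x ∈ K) {F F' : ℝ → X → V} (hF : ∀ t, Continuous (F t))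
    (hF' : Continuous fun z : ℝ × X => F' z.1 z.2)
    (hderiv : ∀ t x, HasDerivAt (F · x) (F' t x) t) (t₀ : ℝ) :
    HasDerivAt (fun t => ∫ x, F t x ∂μ) (∫ x, F' t₀ x ∂μ) t₀ := by
  let S := ContinuousLinearMap.toSpanSingletonCLE (𝕜 := ℝ) (E := V)
  have h := hasFDerivAt_integral_of_ae_mem_compact hK hμK (F' := fun t x => S (F' t x)) hF
    (by fun_prop) (fun t x => (hderiv t x).hasFDerivAt) t₀
  rw [S.integral_comp_comm] at h
  exact hasDerivAt_iff_hasFDerivAt.2 h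

theorem fderiv_integral_mul_exp_apply (hK : IsCompact K) (hμK : ∀ᵐ x ∂μ, x ∈ K)
    {g : X → ℝ} (hg : Continuous g) {L : X → H →L[ℝ] ℝ} (hL : Continuous L) (h v : H) :
    fderiv ℝ (fun h => ∫ x, g x * Real.exp (L x h) ∂μ) h v
      = ∫ x, g x * L x v * Real.exp (L x h) ∂μ := by
  have hderiv := hasFDerivAt_integral_of_ae_mem_compact hK hμK
    (F := fun h x => g x * Real.exp (L x h)) (F' := fun h x => (g x * Real.exp (L x h)) • L x)
    (fun h => by fun_prop) (by fun_prop)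
    (fun h x => by simpa [smul_smul] using ((L x).hasFDerivAt (x := h)).exp.const_mul (g x)) h
  rw [hderiv.fderiv, ContinuousLinearMap.integral_apply
    (integrable_of_continuous_of_ae_mem_compact hK hμK (by fun_prop))]
  simp only [smul_apply, smul_eq_mul, mul_right_comm]

end CompactlyCarriedMeasure

section RotationInvariance

theorem hasDerivAt_exp_smul_apply {V : Type*} [NormedAddCommGroup V] [NormedSpace ℝ V]
    [CompleteSpace V] (J : V →L[ℝ] V) (x : V) (t : ℝ) :
    HasDerivAt (fun t : ℝ => exp (t • J) x) (J (exp (t • J) x)) t := by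
  simpa using (hasDerivAt_exp_smul_const' J t).clm_apply (hasDerivAt_const t x)

variable {E : Type*} [NormedAddCommGroup E] [InnerProductSpace ℝ E] [CompleteSpace E]

theorem rankOne_sub_rankOne_mem_skewAdjoint (u v : E) :
    InnerProductSpace.rankOne ℝ u v - InnerProductSpace.rankOne ℝ v u
      ∈ skewAdjoint (E →L[ℝ] E) := by
  simp [skewAdjoint.mem_iff, ContinuousLinearMap.star_eq_adjoint]

variable [MeasurableSpace E] [BorelSpace E] {μ : Measure E}

theorem integral_comp_exp_smul (hμ : ∀ R : E ≃ₗᵢ[ℝ] E, MeasurePreserving R μ μ)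
    {J : E →L[ℝ] E} (hJ : J ∈ skewAdjoint (E →L[ℝ] E)) (f : E → ℝ) (t : ℝ) :
    ∫ x, f (exp (t • J) x) ∂μ = ∫ x, f x ∂μ := by
  let : NormedAlgebra ℚ (E →L[ℝ] E) := .restrictScalars ℚ ℝ _
  let R := Unitary.linearIsometryEquiv
    ⟨exp (t • J), exp_mem_unitary_of_mem_skewAdjoint (skewAdjoint.smul_mem t hJ)⟩
  exact (hμ R).integral_comp R.toHomeomorph.measurableEmbedding f

theorem integral_fderiv_apply_skewAdjoint_eq_zero [SecondCountableTopology E] [IsFiniteMeasure μ]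
    (hμ : ∀ R : E ≃ₗᵢ[ℝ] E, MeasurePreserving R μ μ) {K : Set E} (hK : IsCompact K)
    (hμK : ∀ᵐ x ∂μ, x ∈ K) {J : E →L[ℝ] E} (hJ : J ∈ skewAdjoint (E →L[ℝ] E))
    {f : E → ℝ} (hf : ContDiff ℝ 1 f) :
    ∫ x, fderiv ℝ f x (J x) ∂μ = 0 := by
  have hexp : Continuous fun t : ℝ => exp (t • J) :=
    continuous_iff_continuousAt.2 fun t => (hasDerivAt_exp_smul_const J t).continuousAt
  have hrot : Continuous fun z : ℝ × E => exp (z.1 • J) z.2 :=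
    (hexp.comp continuous_fst).clm_apply continuous_snd
  have hf' : Continuous (fderiv ℝ f) := hf.continuous_fderiv one_ne_zero
  have hderiv := hasDerivAt_integral_of_ae_mem_compact hK hμK
    (F := fun t x => f (exp (t • J) x))
    (F' := fun t x => fderiv ℝ f (exp (t • J) x) (J (exp (t • J) x)))
    (fun t => hf.continuous.comp (exp (t • J)).continuous)
    ((hf'.comp hrot).clm_apply (J.continuous.comp hrot))
    (fun t x => (hf.differentiable one_ne_zero).differentiableAt.hasFDerivAt.comp_hasDerivAt t
      (hasDerivAt_exp_smul_apply J x t)) 0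
  simp only [integral_comp_exp_smul hμ hJ, zero_smul, exp_zero, one_apply_eq_self] at hderiv
  exact hderiv.unique (hasDerivAt_const _ _)

end RotationInvariance

section BinghamMoment

variable {ι κ : Type*} [Fintype ι]

/-- The integral of `g` against the unnormalised Bingham density with parameters `θ`, relative to
an arbitrary base measure `μ`; for `g = 1` and `μ` the surface measure of the sphere this is the
normalising constant. -/
noncomputable def binghamMoment (μ : Measure (EuclideanSpace ℝ ι)) (θ : ι → ℝ)
    (g : EuclideanSpace ℝ ι → ℝ) : ℝ :=
  ∫ x, g x * Real.exp (∑ a, θ a * x a ^ 2) ∂μ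

/-- The squared norm of the component of `x` along the coordinates in the block `σ ⁻¹' {j}`. It is
the sufficient statistic for the parameter `φ j` shared by these coordinates. -/
def blockNormSq [DecidableEq κ] (σ : ι → κ) (j : κ) (x : EuclideanSpace ℝ ι) : ℝ :=
  ∑ a with σ a = j, x a ^ 2

@[fun_prop]
theorem continuous_blockNormSq [DecidableEq κ] (σ : ι → κ) (j : κ) :
    Continuous (blockNormSq σ j) := by
  unfold blockNormSq
  fun_prop

theorem sum_blockNormSq [DecidableEq κ] [Fintype κ] (σ : ι → κ) (x : EuclideanSpace ℝ ι) :
    ∑ j, blockNormSq σ j x = ‖x‖ ^ 2 := by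
  rw [EuclideanSpace.real_norm_sq_eq]
  exact sum_fiberwise _ _ _

theorem fderiv_mul_mul_exp_apply (θ : ι → ℝ) (a b : ι) (x v : EuclideanSpace ℝ ι) :
    fderiv ℝ (fun y : EuclideanSpace ℝ ι => y a * y b * Real.exp (∑ c, θ c * y c ^ 2)) x v
      = (x a * v b + x b * v a + x a * x b * ∑ c, θ c * (2 * x c * v c))
        * Real.exp (∑ c, θ c * x c ^ 2) := by
  have hcoord (c : ι) := PiLp.hasFDerivAt_apply (𝕜 := ℝ) (E := fun _ => ℝ) 2 x c
  have hquad := HasFDerivAt.fun_sum fun c (_ : c ∈ univ) => ((hcoord c).pow 2).const_mul (θ c)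
  rw [(((hcoord a).fun_mul (hcoord b)).fun_mul hquad.exp).fderiv]
  simp only [Nat.add_one_sub_one, pow_one, nsmul_eq_mul, Nat.cast_ofNat, smul_add, add_apply,
    smul_apply, _root_.sum_apply, PiLp.proj_apply, smul_eq_mul]
  ring

variable {μ : Measure (EuclideanSpace ℝ ι)}

theorem binghamMoment_const_mul (θ : ι → ℝ) (c : ℝ) (g : EuclideanSpace ℝ ι → ℝ) :
    binghamMoment μ θ (fun x => c * g x) = c * binghamMoment μ θ g := by
  simp only [binghamMoment, mul_assoc, integral_const_mul]

variable [IsFiniteMeasure μ] {K : Set (EuclideanSpace ℝ ι)}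

theorem integrable_mul_binghamDensity (hK : IsCompact K) (hμK : ∀ᵐ x ∂μ, x ∈ K)
    (θ : ι → ℝ) {g : EuclideanSpace ℝ ι → ℝ} (hg : Continuous g) :
    Integrable (fun x => g x * Real.exp (∑ a, θ a * x a ^ 2)) μ :=
  integrable_of_continuous_of_ae_mem_compact hK hμK (by fun_prop)

theorem binghamMoment_sum (hK : IsCompact K) (hμK : ∀ᵐ x ∂μ, x ∈ K) (θ : ι → ℝ) {α : Type*}
    (s : Finset α) {g : α → EuclideanSpace ℝ ι → ℝ} (hg : ∀ k ∈ s, Continuous (g k)) :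
    binghamMoment μ θ (fun x => ∑ k ∈ s, g k x) = ∑ k ∈ s, binghamMoment μ θ (g k) := by
  simp only [binghamMoment, sum_mul]
  exact integral_finsetSum s fun k hk => integrable_mul_binghamDensity hK hμK θ (hg k hk)

theorem binghamMoment_sub (hK : IsCompact K) (hμK : ∀ᵐ x ∂μ, x ∈ K) (θ : ι → ℝ)
    {g h : EuclideanSpace ℝ ι → ℝ} (hg : Continuous g) (hh : Continuous h) :
    binghamMoment μ θ (fun x => g x - h x) = binghamMoment μ θ g - binghamMoment μ θ h := by
  simp only [binghamMoment, sub_mul]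
  exact integral_sub (integrable_mul_binghamDensity hK hμK θ hg)
    (integrable_mul_binghamDensity hK hμK θ hh)

theorem binghamMoment_sq_sub_sq
    (hμ : ∀ R : EuclideanSpace ℝ ι ≃ₗᵢ[ℝ] EuclideanSpace ℝ ι, MeasurePreserving R μ μ)
    (hK : IsCompact K) (hμK : ∀ᵐ x ∂μ, x ∈ K) (θ : ι → ℝ) {a b : ι} (hab : a ≠ b) :
    binghamMoment μ θ (fun x => x a ^ 2 - x b ^ 2)
      = 2 * (θ a - θ b) * binghamMoment μ θ fun x => x a ^ 2 * x b ^ 2 := by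
  classical
  let e (c : ι) : EuclideanSpace ℝ ι := EuclideanSpace.single c 1
  let J := InnerProductSpace.rankOne ℝ (e b) (e a) - InnerProductSpace.rankOne ℝ (e a) (e b)
  let f (x : EuclideanSpace ℝ ι) : ℝ := x a * x b * Real.exp (∑ c, θ c * x c ^ 2)
  have hJ (x : EuclideanSpace ℝ ι) : J x = x a • e b - x b • e a := by
    simp [J, e, EuclideanSpace.inner_single_left]
  have hJa (x : EuclideanSpace ℝ ι) : J x a = -x b := by simp [hJ, e, hab]
  have hJb (x : EuclideanSpace ℝ ι) : J x b = x a := by simp [hJ, e, hab.symm]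
  have hJsum (x : EuclideanSpace ℝ ι) :
      ∑ c, θ c * (2 * x c * J x c) = θ b * (2 * x b * x a) - θ a * (2 * x a * x b) := by
    simp [hJ, e, mul_sub, sum_sub_distrib, PiLp.single_apply]
  have hderiv (x : EuclideanSpace ℝ ι) : fderiv ℝ f x (J x)
      = (x a ^ 2 - x b ^ 2 - 2 * (θ a - θ b) * (x a ^ 2 * x b ^ 2))
        * Real.exp (∑ c, θ c * x c ^ 2) := by
    rw [fderiv_mul_mul_exp_apply, hJa, hJb, hJsum]
    ring
  have hzero := integral_fderiv_apply_skewAdjoint_eq_zero hμ hK hμK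
    (rankOne_sub_rankOne_mem_skewAdjoint (e b) (e a)) (f := f) (by fun_prop)
  rw [← binghamMoment_const_mul, ← sub_eq_zero,
    ← binghamMoment_sub hK hμK θ (by fun_prop) (by fun_prop), ← hzero]
  exact integral_congr_ae (.of_forall fun x => (hderiv x).symm)

variable [DecidableEq κ]

theorem binghamMoment_blockNormSq_mul_blockNormSq
    (hμ : ∀ R : EuclideanSpace ℝ ι ≃ₗᵢ[ℝ] EuclideanSpace ℝ ι, MeasurePreserving R μ μ)
    (hK : IsCompact K) (hμK : ∀ᵐ x ∂μ, x ∈ K) (σ : ι → κ) (φ : κ → ℝ) {i j : κ} (hij : i ≠ j) :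
    2 * (φ i - φ j) * binghamMoment μ (fun a => φ (σ a))
        (fun x => blockNormSq σ i x * blockNormSq σ j x)
      = #{b | σ b = j} * binghamMoment μ (fun a => φ (σ a)) (blockNormSq σ i)
        - #{a | σ a = i} * binghamMoment μ (fun a => φ (σ a)) (blockNormSq σ j) := by
  let M := binghamMoment μ fun a => φ (σ a)
  let s : Finset (ι × ι) := ({a | σ a = i} : Finset ι) ×ˢ ({b | σ b = j} : Finset ι)
  have hpair : ∀ z ∈ s, 2 * (φ i - φ j) * M (fun x => x z.1 ^ 2 * x z.2 ^ 2)
      = M fun x => x z.1 ^ 2 - x z.2 ^ 2 := by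
    simp only [s, mem_product, mem_filter_univ, and_imp, Prod.forall]
    rintro a b rfl rfl
    exact (binghamMoment_sq_sub_sq hμ hK hμK (φ ∘ σ) (ne_of_apply_ne σ hij)).symm
  calc 2 * (φ i - φ j) * M (fun x => blockNormSq σ i x * blockNormSq σ j x)
      = 2 * (φ i - φ j) * M (fun x => ∑ z ∈ s, x z.1 ^ 2 * x z.2 ^ 2) := by
        simp only [blockNormSq, sum_mul_sum, s, sum_product]
    _ = ∑ z ∈ s, 2 * (φ i - φ j) * M (fun x => x z.1 ^ 2 * x z.2 ^ 2) := by
        rw [← mul_sum, ← binghamMoment_sum hK hμK _ s fun z _ => by fun_prop]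
    _ = ∑ z ∈ s, M (fun x => x z.1 ^ 2 - x z.2 ^ 2) := sum_congr rfl hpair
    _ = M (fun x => ∑ z ∈ s, (x z.1 ^ 2 - x z.2 ^ 2)) :=
        (binghamMoment_sum hK hμK _ s fun z _ => by fun_prop).symm
    _ = M (fun x => #{b | σ b = j} * blockNormSq σ i x
          - #{a | σ a = i} * blockNormSq σ j x) := by
        simp only [blockNormSq, s, sum_product, sum_sub_distrib, sum_const, nsmul_eq_mul, mul_sum]
    _ = #{b | σ b = j} * M (blockNormSq σ i) - #{a | σ a = i} * M (blockNormSq σ j) := by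
        rw [← binghamMoment_const_mul, ← binghamMoment_const_mul,
          ← binghamMoment_sub hK hμK _ (by fun_prop) (by fun_prop)]

theorem fderiv_binghamMoment_single [Finite κ] (hK : IsCompact K) (hμK : ∀ᵐ x ∂μ, x ∈ K)
    (σ : ι → κ) {g : EuclideanSpace ℝ ι → ℝ} (hg : Continuous g) (φ : κ → ℝ) (j : κ) :
    fderiv ℝ (fun ψ : κ → ℝ => binghamMoment μ (fun a => ψ (σ a)) g) φ (Pi.single j 1)
      = binghamMoment μ (fun a => φ (σ a)) fun x => g x * blockNormSq σ j x := by
  let L (x : EuclideanSpace ℝ ι) : (κ → ℝ) →L[ℝ] ℝ :=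
    ∑ a, x a ^ 2 • ContinuousLinearMap.proj (R := ℝ) (φ := fun _ : κ => ℝ) (σ a)
  have hL (x : EuclideanSpace ℝ ι) (ψ : κ → ℝ) : L x ψ = ∑ a, ψ (σ a) * x a ^ 2 := by
    simp [L, mul_comm]
  have hLsingle (x : EuclideanSpace ℝ ι) : L x (Pi.single j 1) = blockNormSq σ j x := by
    simp [hL, blockNormSq, sum_filter, Pi.single_apply]
  have := Fintype.ofFinite κ
  have hLcont : Continuous L := by fun_prop
  simp only [binghamMoment, ← hL, ← hLsingle]
  exact fderiv_integral_mul_exp_apply hK hμK hg hLcont φ _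

theorem sum_binghamMoment_blockNormSq_mul [Fintype κ] (hμ : ∀ᵐ x ∂μ, ‖x‖ = 1)
    (θ : ι → ℝ) (σ : ι → κ) {g : EuclideanSpace ℝ ι → ℝ} (hg : Continuous g) :
    ∑ j, binghamMoment μ θ (fun x => blockNormSq σ j x * g x) = binghamMoment μ θ g := by
  rw [← binghamMoment_sum (isCompact_sphere 0 1) (by simpa using hμ) θ univ
    fun j _ => by fun_prop]
  refine integral_congr_ae (hμ.mono fun x hx => ?_)
  simp only [← sum_mul, sum_blockNormSq, hx, one_pow, one_mul]

end BinghamMoment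

theorem bingham_pfaffian_degenerate_general {ι κ : Type*} [Fintype ι] [Fintype κ] [DecidableEq κ]
    (μ : Measure (EuclideanSpace ℝ ι)) [IsFiniteMeasure μ]
    (hrot : ∀ R : EuclideanSpace ℝ ι ≃ₗᵢ[ℝ] EuclideanSpace ℝ ι, MeasurePreserving R μ μ)
    (hsphere : ∀ᵐ x ∂μ, ‖x‖ = 1) (d : κ → ℕ) (σ : ι → κ) (hσ : ∀ j, #{a | σ a = j} = d j)
    (φ : κ → ℝ) :
    let D : (κ → ℝ) → ℝ := fun ψ => ∫ x, Real.exp (∑ a, ψ (σ a) * x a ^ 2) ∂μ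
    let G : κ → (κ → ℝ) → ℝ := fun j ψ => fderiv ℝ D ψ (Pi.single j 1)
    (∀ i j, φ i ≠ φ j →
      fderiv ℝ (G j) φ (Pi.single i 1) = (d j * G i φ - d i * G j φ) / (2 * (φ i - φ j)))
    ∧ ∀ i, (∀ k, k ≠ i → φ i ≠ φ k) →
      fderiv ℝ (G i) φ (Pi.single i 1)
        = G i φ - ∑ k ∈ univ.erase i, (d k * G i φ - d i * G k φ) / (2 * (φ i - φ k)) := by
  intro D G
  have hK : IsCompact (sphere (0 : EuclideanSpace ℝ ι) 1) := isCompact_sphere 0 1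
  have hμK : ∀ᵐ x ∂μ, x ∈ sphere (0 : EuclideanSpace ℝ ι) 1 := by simpa using hsphere
  have hG (j : κ) : G j = fun ψ => binghamMoment μ (fun a => ψ (σ a)) (blockNormSq σ j) := by
    funext ψ
    simpa [G, D, binghamMoment] using
      fderiv_binghamMoment_single hK hμK σ (continuous_const (y := 1)) ψ j
  have hG' (i j : κ) : fderiv ℝ (G j) φ (Pi.single i 1)
      = binghamMoment μ (fun a => φ (σ a)) fun x => blockNormSq σ j x * blockNormSq σ i x := by
    rw [hG, fderiv_binghamMoment_single hK hμK σ (continuous_blockNormSq σ j)]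
  have hmixed (i j : κ) (hφ : φ i ≠ φ j) : fderiv ℝ (G j) φ (Pi.single i 1)
      = (d j * G i φ - d i * G j φ) / (2 * (φ i - φ j)) := by
    rw [eq_div_iff (mul_ne_zero two_ne_zero (sub_ne_zero.2 hφ)), hG', hG, hG, ← hσ, ← hσ,
      ← binghamMoment_blockNormSq_mul_blockNormSq hrot hK hμK σ φ (ne_of_apply_ne φ hφ)]
    simp only [mul_comm]
  have hsum (i : κ) : ∑ k, fderiv ℝ (G k) φ (Pi.single i 1) = G i φ := by
    rw [sum_congr rfl fun k _ => hG' i k, hG,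
      sum_binghamMoment_blockNormSq_mul hsphere _ σ (continuous_blockNormSq σ i)]
  refine ⟨hmixed, fun i hφ => ?_⟩
  rw [eq_sub_iff_add_eq, ← sum_congr rfl fun k hk => hmixed i k (hφ k (ne_of_mem_erase hk)),
    add_sum_erase univ (fun k => fderiv ℝ (G k) φ (Pi.single i 1)) (mem_univ i), hsum]

/-- Pfaffian system for the Bingham normalising constant in the degenerate case:
`θ(φ,d)` is the parameter vector (encoded by an assignment `σ : Fin p → Fin q`
whose fibre over `j` has cardinality `d j`) in which `φ_j` appears `d_j` times.
With `D(φ) = C(θ(φ,d))` and `G_j = ∂D/∂φ_j`, on the set of pairwise distinct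
`φ`: for `i ≠ j`, `∂_{φ_i} G_j = (d_j G_i − d_i G_j)/(2(φ_i − φ_j))`, and
`∂_{φ_i} G_i = G_i − ∑_{k ≠ i} (d_k G_i − d_i G_k)/(2(φ_i − φ_k))`. -/
theorem bingham_pfaffian_degenerate (p q : ℕ) (hp : 2 ≤ p)
    (d : Fin q → ℕ) (hd : ∀ j, 0 < d j) (hsum : ∑ j, d j = p)
    (σ : Fin p → Fin q)
    (hσ : ∀ j, (Finset.univ.filter fun i => σ i = j).card = d j)
    (φ : Fin q → ℝ) (hdist : ∀ i j : Fin q, i ≠ j → φ i ≠ φ j) :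
    let D : (Fin q → ℝ) → ℝ := fun ψ => binghamC p (fun i => ψ (σ i))
    let G : Fin q → (Fin q → ℝ) → ℝ := fun j ψ => fderiv ℝ D ψ (Pi.single j 1)
    (∀ i j : Fin q, i ≠ j →
      fderiv ℝ (G j) φ (Pi.single i 1)
        = (d j * G i φ - d i * G j φ) / (2 * (φ i - φ j)))
    ∧ (∀ i : Fin q,
      fderiv ℝ (G i) φ (Pi.single i 1)
        = G i φ - ∑ k ∈ Finset.univ.erase i,
            (d k * G i φ - d i * G k φ) / (2 * (φ i - φ k))) := by
  have hfinite : μH[(p : ℝ) - 1] {x : EuclideanSpace ℝ (Fin p) | ‖x‖ = 1} < ⊤ := by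
    simpa using hausdorffMeasure_unitSphere_lt_top (E := EuclideanSpace ℝ (Fin p))
  have := isFiniteMeasure_restrict.2 hfinite.ne
  have hpfaffian := bingham_pfaffian_degenerate_general
    (μH[(p : ℝ) - 1].restrict {x : EuclideanSpace ℝ (Fin p) | ‖x‖ = 1})
    (measurePreserving_hausdorffMeasure_restrict_unitSphere _)
    (ae_restrict_mem (measurableSet_eq_fun measurable_norm measurable_const)) d σ hσ φ
  exact ⟨fun i j hij => hpfaffian.1 i j (hdist i j hij),
    fun i => hpfaffian.2 i fun k hk => hdist i k hk.symm⟩
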